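/- Let L ∈ ℝ^{N×N} be a graph Laplacian whose associated digraph contains a directed spanning tree. Then there exist a constant d_max > 0, a class-KL function β, and a class-K function γ such that for every piecewise continuous disturbance d : ℝ_{≥0} → ℝ^N with ‖d(t)‖_∞ < d_max for all t ≥ 0, every solution z of ż = −sat(Lz) + d(t) satisfies ‖Lz(t)‖_∞ ≤ β(‖Lz(0)‖_∞, t) + γ(sup_{t≥0} ‖d(t)‖_∞) for all t ≥ 0. -/

import Mathlib

/-!
The diameter `max z - min z` of the state is comparable to `‖L z‖`, and it decreases by a fixed
amount over every time interval of a fixed length `H` as long as it is large; this yields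
boundedness of `L z` after a time affine in `‖L z(0)‖`. Since `IsClassK` does not ask for
`γ 0 = 0`, this ultimate bound may be absorbed in a constant term of `γ`.

Everything rests on a vector `c` with `0 < κ ≤ c ≤ 1` and `(L c) i ≤ -κ` for every `i` other than
the root `k` (`exists_potential`); `c i = θ ^ r i` works, with `r i` the distance from the root and
`θ` small.

* Static use of `c`: by the maximum principle, `z + s c` attains its maximum at `k` when `s` is
  slightly larger than `‖L z‖ / κ`, so all `z i` lie within `s` of `z k` (`spread_of_norm`).
* Dynamic use: let `M` bound `z` at time `a`. If the root lies well below `M`, it stays so during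
  `[a, a + H]`, because the velocities are bounded by `2`. For the other nodes
  `g(t) = M + B - c (B + (t - a) / 2)`, with `B = 1 / κ`, is an upper barrier: when `z i` touches it
  from below, `(L z) i ≥ (L g) i ≥ B κ = 1`, so the saturation is fully active and `z i` moves down
  with speed at least `1 - δ`. Hence the maximum decreases (`IsSol.drop`), whereas the minimum
  loses at most `δ H`, which is less for `δ = κ / 4` and `H` large. If the root lies in
  the upper half, the same applies to `-z`.
-/

open Filter Topology

noncomputable section

/-- The all-ones vector in `ℝ^N`. -/
def onesVec (N : ℕ) : Fin N → ℝ := fun _ => 1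

/-- A function `ℝ → ℝ^N` achieves (first-order) consensus. -/
def AchievesConsensus {N : ℕ} (x : ℝ → Fin N → ℝ) : Prop :=
  ∀ i j : Fin N, i ≠ j →
    Tendsto (fun t => |x t i - x t j|) atTop (nhds 0)

/-- `x` achieves `n`-th order consensus. -/
def AchievesNthOrderConsensus {N : ℕ} (n : ℕ) (x : ℝ → Fin N → ℝ) : Prop :=
  ∀ k < n, ∀ i j : Fin N, i ≠ j →
    Tendsto (fun t => |iteratedDeriv k x t i - iteratedDeriv k x t j|) atTop (nhds 0)

/-- Class-K function: continuous, nonnegative and strictly increasing on `[0,∞)`. -/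
def IsClassK (γ : ℝ → ℝ) : Prop :=
  ContinuousOn γ (Set.Ici 0) ∧ (∀ r, 0 ≤ r → 0 ≤ γ r) ∧ StrictMonoOn γ (Set.Ici 0)

/-- Class-KL function. -/
def IsClassKL (β : ℝ → ℝ → ℝ) : Prop :=
  ContinuousOn (fun p : ℝ × ℝ => β p.1 p.2) (Set.Ici 0 ×ˢ Set.Ici 0) ∧
  (∀ s, 0 ≤ s → IsClassK (fun r => β r s)) ∧
  (∀ r, 0 ≤ r → AntitoneOn (β r) (Set.Ici 0) ∧ Tendsto (β r) atTop (nhds 0))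

/-- A seminorm-like function on `ℝ^N` (triangle inequality and absolute homogeneity). -/
def IsSeminormFun {N : ℕ} (p : (Fin N → ℝ) → ℝ) : Prop :=
  (∀ x y : Fin N → ℝ, p (x + y) ≤ p x + p y) ∧
  (∀ (a : ℝ) (x : Fin N → ℝ), p (a • x) = |a| * p x)

/-- (A1) Relative feedback. -/
def RelativeFeedback {N : ℕ} (𝓛 : (Fin N → ℝ) → ℝ → Fin N → ℝ) : Prop :=
  ∀ (z : Fin N → ℝ) (a t : ℝ), 0 ≤ t → 𝓛 (z + a • onesVec N) t = 𝓛 z t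

/-- Piecewise continuity: on each compact interval, continuity fails at most on a finite set. -/
def PiecewiseContinuous {E : Type*} [TopologicalSpace E] (f : ℝ → E) : Prop :=
  ∀ a b : ℝ, ∃ s : Finset ℝ, ∀ t ∈ Set.Icc a b, t ∉ s → ContinuousAt f t

/-- (A2) Uniform Lipschitz in the state, piecewise continuous in time. -/
def LipschitzAssumption {N : ℕ} (𝓛 : (Fin N → ℝ) → ℝ → Fin N → ℝ) : Prop :=
  (∃ C > 0, ∀ (z y : Fin N → ℝ) (t : ℝ), 0 ≤ t → ‖𝓛 z t - 𝓛 y t‖ ≤ C * ‖z - y‖) ∧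
  (∀ z : Fin N → ℝ, PiecewiseContinuous (fun t => 𝓛 z t))

/-- (A3) ISS with respect to a seminorm vanishing exactly on the consensus subspace. -/
def ISSAssumption {N : ℕ} (𝓛 : (Fin N → ℝ) → ℝ → Fin N → ℝ) : Prop :=
  ∃ p : (Fin N → ℝ) → ℝ, IsSeminormFun p ∧
    (∀ z : Fin N → ℝ, p z = 0 ↔ ∃ c : ℝ, z = c • onesVec N) ∧
    ∃ M > (0:ℝ), ∃ β γ : _, IsClassKL β ∧ IsClassK γ ∧
      ∀ (T₀ : ℝ), 0 ≤ T₀ → ∀ w z : ℝ → Fin N → ℝ,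
        (∀ t, T₀ ≤ t → ‖w t‖ ≤ M) →
        (∀ t, T₀ ≤ t → HasDerivAt z (-(𝓛 (z t) t) + w t) t) →
        ∀ t, T₀ ≤ t →
          p (z t) ≤ β (p (z T₀)) (t - T₀) + γ (sSup {r : ℝ | ∃ τ, T₀ ≤ τ ∧ r = ‖w τ‖})

/-- (A4) Smoothness of order `m` with bounds on total time derivatives along curves. -/
def SmoothnessAssumption {N : ℕ} (m : ℕ) (𝓛 : (Fin N → ℝ) → ℝ → Fin N → ℝ) : Prop :=
  ContDiff ℝ m (fun q : (Fin N → ℝ) × ℝ => 𝓛 q.1 q.2) ∧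
  ∀ j ≤ m, ∃ α : ℝ → ℝ, IsClassK α ∧
    ∀ z : ℝ → Fin N → ℝ, ContDiff ℝ j z → ∀ t : ℝ, 0 ≤ t →
      ‖iteratedDeriv j (fun s => 𝓛 (z s) s) t‖ ≤
        α (Finset.univ.sup' Finset.univ_nonempty
            (fun i : Fin (j+1) => ‖iteratedDeriv i z t‖))

/-- Iterated first-order operator: `compOpSeq 𝓛 k x = (d/dt + 𝓛_{k-1}) ∘ ⋯ ∘ (d/dt + 𝓛_0) (x)`. -/
def compOpSeq {N : ℕ} (𝓛 : ℕ → (Fin N → ℝ) → ℝ → Fin N → ℝ) :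
    ℕ → (ℝ → Fin N → ℝ) → (ℝ → Fin N → ℝ)
  | 0, x => x
  | k + 1, x => fun t => deriv (compOpSeq 𝓛 k x) t + 𝓛 k (compOpSeq 𝓛 k x t) t

/-- `x` solves the compositional consensus system of order `n`. -/
def IsCompositionalSolution {N : ℕ} (𝓛 : ℕ → (Fin N → ℝ) → ℝ → Fin N → ℝ) (n : ℕ)
    (x : ℝ → Fin N → ℝ) : Prop :=
  (∀ k < n, ∀ t : ℝ, 0 ≤ t → DifferentiableAt ℝ (compOpSeq 𝓛 k x) t) ∧
  (∀ t : ℝ, 0 ≤ t → compOpSeq 𝓛 n x t = 0)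

/-- `ξ` solves the cascade state-space form. -/
def IsCascadeSolution {N : ℕ} (𝓛 : ℕ → (Fin N → ℝ) → ℝ → Fin N → ℝ) (n : ℕ)
    (ξ : ℕ → ℝ → Fin N → ℝ) : Prop :=
  (∀ k, k + 1 < n → ∀ t : ℝ, 0 ≤ t →
    HasDerivAt (ξ k) (-(𝓛 k (ξ k t) t) + ξ (k+1) t) t) ∧
  (∀ t : ℝ, 0 ≤ t → HasDerivAt (ξ (n-1)) (-(𝓛 (n-1) (ξ (n-1) t) t)) t)

/-- A (possibly weighted) graph Laplacian. -/
def IsGraphLaplacian {N : ℕ} (L : Matrix (Fin N) (Fin N) ℝ) : Prop :=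
  (∀ i j, i ≠ j → L i j ≤ 0) ∧ (∀ i, ∑ j, L i j = 0)

/-- One step along a directed edge of the digraph associated with `L`:
`stepRel L a b` iff there is an edge from `a` to `b`, i.e. `b ≠ a` and `L b a ≠ 0`. -/
def stepRel {N : ℕ} (L : Matrix (Fin N) (Fin N) ℝ) (a b : Fin N) : Prop :=
  b ≠ a ∧ L b a ≠ 0

/-- The digraph associated with `L` contains a directed spanning tree rooted at `k`. -/
def SpanningTreeFrom {N : ℕ} (L : Matrix (Fin N) (Fin N) ℝ) (k : Fin N) : Prop :=
  ∀ i : Fin N, Relation.ReflTransGen (stepRel L) k i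

/-- The digraph associated with `L` contains a directed spanning tree. -/
def HasDirectedSpanningTree {N : ℕ} (L : Matrix (Fin N) (Fin N) ℝ) : Prop :=
  ∃ k : Fin N, SpanningTreeFrom L k

/-- Componentwise saturation. -/
def sat {N : ℕ} (y : Fin N → ℝ) : Fin N → ℝ := fun i => max (-1) (min 1 (y i))

/-! ### A potential for rooted digraphs -/

/-- Nodes that can be reached from `k` in at most `n` steps. -/
def reachIn {N : ℕ} (L : Matrix (Fin N) (Fin N) ℝ) (k : Fin N) : ℕ → Fin N → Prop
  | 0, i => i = k
  | n + 1, i => reachIn L k n i ∨ ∃ u, reachIn L k n u ∧ stepRel L u i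

lemma exists_rank {N : ℕ} {L : Matrix (Fin N) (Fin N) ℝ} {k : Fin N} (h : SpanningTreeFrom L k) :
    ∃ r : Fin N → ℕ, ∀ i, i ≠ k → ∃ u, r u < r i ∧ stepRel L u i := by
  classical
  have hex : ∀ i, ∃ n, reachIn L k n i := by
    intro i
    induction h i with
    | refl => exact ⟨0, rfl⟩
    | tail _ hs ih =>
      obtain ⟨n, hn⟩ := ih
      exact ⟨n + 1, Or.inr ⟨_, hn, hs⟩⟩
  refine ⟨fun i => Nat.find (hex i), fun i hi => ?_⟩
  have h1 := Nat.find_spec (hex i)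
  rcases hn : Nat.find (hex i) with _ | n
  · rw [hn] at h1
    exact absurd h1 hi
  · rw [hn] at h1
    rcases h1 with h1 | ⟨u, hu, hs⟩
    · exact absurd h1 (Nat.find_min (hex i) (by omega))
    · refine ⟨u, ?_, hs⟩
      have := Nat.find_min' (hex u) hu
      simp only [hn]
      omega

/-- A strict supersolution of the Laplacian away from the root. -/
lemma exists_potential {N : ℕ} {L : Matrix (Fin N) (Fin N) ℝ} (hL : IsGraphLaplacian L)
    {k : Fin N} (h : SpanningTreeFrom L k) :
    ∃ (c : Fin N → ℝ) (κ : ℝ), 0 < κ ∧ (∀ i, κ ≤ c i) ∧ (∀ i, c i ≤ 1) ∧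
      ∀ i, i ≠ k → L.mulVec c i ≤ -κ := by
  classical
  obtain ⟨r, hr⟩ := exists_rank h
  set A : ℝ := ∑ i, |L i i| with hA
  have hA0 : 0 ≤ A := Finset.sum_nonneg fun _ _ => abs_nonneg _
  have hev : ∀ᶠ θ : ℝ in 𝓝[>] 0, ∀ i u, L i u < 0 → θ * (A + 1) < -L i u := by
    refine eventually_all.2 fun i => eventually_all.2 fun u => ?_
    by_cases hlt : L i u < 0
    · have : Tendsto (fun θ : ℝ => θ * (A + 1)) (𝓝[>] 0) (𝓝 (0 * (A + 1))) :=
        ((continuous_id.mul continuous_const).tendsto 0).mono_left nhdsWithin_le_nhds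
      rw [zero_mul] at this
      filter_upwards [this.eventually_lt_const (show (0 : ℝ) < -L i u by linarith)] with θ hθ _
      exact hθ
    · exact Eventually.of_forall fun θ h => absurd h hlt
  have hev2 : ∀ᶠ θ : ℝ in 𝓝[>] 0, θ ∈ Set.Ioo (0 : ℝ) 1 := Ioo_mem_nhdsGT one_pos
  obtain ⟨θ, hθ, hθ0, hθ1⟩ := (hev.and hev2).exists
  set R : ℕ := ∑ i, r i with hR
  have hrR : ∀ i, r i ≤ R := fun i =>
    Finset.single_le_sum (f := r) (fun _ _ => Nat.zero_le _) (Finset.mem_univ i)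
  have hκ : ∀ i, θ ^ R ≤ θ ^ r i := fun i => pow_le_pow_of_le_one hθ0.le hθ1.le (hrR i)
  refine ⟨fun i => θ ^ r i, θ ^ R, by positivity, hκ,
    fun i => pow_le_one₀ hθ0.le hθ1.le, fun i hi => ?_⟩
  obtain ⟨u, hu, hiu, hne⟩ := hr i hi
  have hlt : L i u < 0 := lt_of_le_of_ne (hL.1 i u hiu) hne
  have hs := hθ i u hlt
  have hcu : θ ^ r i ≤ θ * θ ^ r u := by
    rw [← pow_succ']
    exact pow_le_pow_of_le_one hθ0.le hθ1.le hu
  have hii : L i i ≤ A := (le_abs_self _).trans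
    (Finset.single_le_sum (f := fun i => |L i i|) (fun _ _ => abs_nonneg _) (Finset.mem_univ i))
  have hsum : L.mulVec (fun i => θ ^ r i) i ≤ L i i * θ ^ r i + L i u * θ ^ r u := by
    have hle : ∑ j, L i j * θ ^ r j ≤ ∑ j ∈ {i, u}, L i j * θ ^ r j := by
      rw [← neg_le_neg_iff, ← Finset.sum_neg_distrib, ← Finset.sum_neg_distrib]
      refine Finset.sum_le_sum_of_subset_of_nonneg (Finset.subset_univ _) fun j _ hj => ?_
      rw [neg_nonneg]
      refine mul_nonpos_of_nonpos_of_nonneg (hL.1 i j ?_) (by positivity)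
      rintro rfl
      simp at hj
    rwa [Finset.sum_pair hiu] at hle
  have hpi : 0 < θ ^ r i := by positivity
  have hpu : 0 < θ ^ r u := by positivity
  have e1 : L i i * θ ^ r i ≤ A * θ ^ r i := by gcongr
  have e2 : θ * (A + 1) * θ ^ r u ≤ -L i u * θ ^ r u := by gcongr
  have e3 : (A + 1) * θ ^ r i ≤ (A + 1) * (θ * θ ^ r u) := by gcongr
  have := hκ i
  linarith

/-! ### Static estimates -/

lemma mulVec_le_of_touch {N : ℕ} {L : Matrix (Fin N) (Fin N) ℝ} (hL : IsGraphLaplacian L)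
    {x g : Fin N → ℝ} (hx : ∀ j, x j ≤ g j) {i : Fin N} (hi : x i = g i) :
    L.mulVec g i ≤ L.mulVec x i := by
  simp only [Matrix.mulVec, dotProduct]
  refine Finset.sum_le_sum fun j _ => ?_
  by_cases hj : i = j
  · subst hj
    rw [hi]
  · exact mul_le_mul_of_nonpos_left (hx j) (hL.1 i j hj)

lemma mulVec_const {N : ℕ} {L : Matrix (Fin N) (Fin N) ℝ} (hL : IsGraphLaplacian L)
    (m : ℝ) (i : Fin N) : L.mulVec (fun _ => m) i = 0 := by
  simp only [Matrix.mulVec, dotProduct]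
  rw [← Finset.sum_mul, hL.2 i, zero_mul]

lemma mulVec_affine {N : ℕ} {L : Matrix (Fin N) (Fin N) ℝ} (hL : IsGraphLaplacian L)
    (m b : ℝ) (c : Fin N → ℝ) (i : Fin N) :
    L.mulVec (fun j => m - c j * b) i = -(b * L.mulVec c i) := by
  have h : (fun j => m - c j * b) = (fun _ => m) - b • c := by
    ext j
    simp [mul_comm]
  rw [h, Matrix.mulVec_sub, Matrix.mulVec_smul, Pi.sub_apply, mulVec_const hL]
  simp

/-- The entries of `x` lie in an interval of length `v`. -/
def Spread {N : ℕ} (v : ℝ) (x : Fin N → ℝ) : Prop := ∃ m, ∀ i, m ≤ x i ∧ x i ≤ m + v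

lemma Spread.mono {N : ℕ} {v w : ℝ} {x : Fin N → ℝ} (h : Spread v x) (hvw : v ≤ w) :
    Spread w x := by
  obtain ⟨m, hm⟩ := h
  exact ⟨m, fun i => ⟨(hm i).1, (hm i).2.trans (by linarith)⟩⟩

/-- By the maximum principle for `x + s c`. -/
lemma le_root_add {N : ℕ} {L : Matrix (Fin N) (Fin N) ℝ} (hL : IsGraphLaplacian L)
    {k : Fin N} {c : Fin N → ℝ} {κ : ℝ} (hκ : 0 < κ) (hc0 : ∀ i, κ ≤ c i) (hc1 : ∀ i, c i ≤ 1)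
    (hLc : ∀ i, i ≠ k → L.mulVec c i ≤ -κ) (x : Fin N → ℝ) {s : ℝ} (hs0 : 0 ≤ s)
    (hs : ∀ i, L.mulVec x i < s * κ) (i : Fin N) : x i ≤ x k + s := by
  have : Nonempty (Fin N) := ⟨k⟩
  obtain ⟨p, hp⟩ := Finite.exists_max fun i => x i + s * c i
  have hpk : p = k := by
    by_contra hne
    have h1 := mulVec_le_of_touch hL (x := fun i => x i + s * c i)
      (g := fun _ => x p + s * c p) (fun j => hp j) (i := p) rfl
    rw [mulVec_const hL] at h1
    have h2 : (fun i => x i + s * c i) = x + s • c := by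
      ext j
      simp
    rw [h2, Matrix.mulVec_add, Matrix.mulVec_smul] at h1
    simp only [Pi.add_apply, Pi.smul_apply, smul_eq_mul] at h1
    have h3 := mul_le_mul_of_nonneg_left (hLc p hne) hs0
    have := hs p
    linarith
  have h1 := hp i
  rw [hpk] at h1
  have h2 := mul_le_mul_of_nonneg_left (hc1 k) hs0
  have h3 : 0 ≤ s * c i := mul_nonneg hs0 (hκ.le.trans (hc0 i))
  linarith

lemma spread_of_norm {N : ℕ} {L : Matrix (Fin N) (Fin N) ℝ} (hL : IsGraphLaplacian L)
    {k : Fin N} {c : Fin N → ℝ} {κ : ℝ} (hκ : 0 < κ) (hc0 : ∀ i, κ ≤ c i) (hc1 : ∀ i, c i ≤ 1)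
    (hLc : ∀ i, i ≠ k → L.mulVec c i ≤ -κ) (x : Fin N → ℝ) :
    Spread (2 * (‖L.mulVec x‖ + 1) / κ) x := by
  have hs0 : 0 ≤ (‖L.mulVec x‖ + 1) / κ := by positivity
  have hsκ : (‖L.mulVec x‖ + 1) / κ * κ = ‖L.mulVec x‖ + 1 := by field_simp
  have hn : ∀ i, |L.mulVec x i| ≤ ‖L.mulVec x‖ := fun i => norm_le_pi_norm (L.mulVec x) i
  refine ⟨x k - (‖L.mulVec x‖ + 1) / κ, fun i => ⟨?_, ?_⟩⟩
  · have := le_root_add hL hκ hc0 hc1 hLc (-x) hs0 (fun j => by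
      rw [hsκ, Matrix.mulVec_neg, Pi.neg_apply]
      linarith [neg_abs_le (L.mulVec x j), hn j]) i
    simp only [Pi.neg_apply] at this
    linarith
  · have := le_root_add hL hκ hc0 hc1 hLc x hs0 (fun j => by
      rw [hsκ]
      linarith [le_abs_self (L.mulVec x j), hn j]) i
    have e : 2 * (‖L.mulVec x‖ + 1) / κ = 2 * ((‖L.mulVec x‖ + 1) / κ) := by ring
    rw [e]
    linarith

lemma norm_le_of_spread {N : ℕ} {L : Matrix (Fin N) (Fin N) ℝ} (hL : IsGraphLaplacian L)
    {v : ℝ} (hv : 0 ≤ v) {x : Fin N → ℝ} (hx : Spread v x) :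
    ‖L.mulVec x‖ ≤ (∑ i, ∑ j, |L i j|) * v := by
  obtain ⟨m, hm⟩ := hx
  refine (pi_norm_le_iff_of_nonneg (by positivity)).2 fun i => ?_
  have h1 : L.mulVec x i = ∑ j, L i j * (x j - m) := by
    simp only [mul_sub, Finset.sum_sub_distrib, ← Finset.sum_mul, hL.2 i, zero_mul, sub_zero]
    rfl
  rw [h1, Real.norm_eq_abs]
  calc |∑ j, L i j * (x j - m)| ≤ ∑ j, |L i j * (x j - m)| := Finset.abs_sum_le_sum_abs _ _
    _ ≤ ∑ j, |L i j| * v := by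
        refine Finset.sum_le_sum fun j _ => ?_
        rw [abs_mul]
        refine mul_le_mul_of_nonneg_left ?_ (abs_nonneg _)
        rw [abs_of_nonneg (by linarith [(hm j).1])]
        linarith [(hm j).2]
    _ = (∑ j, |L i j|) * v := by rw [Finset.sum_mul]
    _ ≤ _ := by
        refine mul_le_mul_of_nonneg_right ?_ hv
        exact Finset.single_le_sum (f := fun i => ∑ j, |L i j|)
          (fun _ _ => Finset.sum_nonneg fun _ _ => abs_nonneg _) (Finset.mem_univ i)

/-! ### Barriers -/

/-- Vector barrier principle: `z ≤ g` persists provided that each component which touches its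
barrier, while all the others are below theirs, has there a smaller derivative than the barrier. -/
lemma barrier {N : ℕ} {z z' g g' : ℝ → Fin N → ℝ} {a b : ℝ}
    (hz : ∀ t ∈ Set.Icc a b, ∀ i, HasDerivAt (fun s => z s i) (z' t i) t)
    (hg : ∀ t ∈ Set.Icc a b, ∀ i, HasDerivAt (fun s => g s i) (g' t i) t)
    (ha : ∀ i, z a i ≤ g a i)
    (htouch : ∀ t ∈ Set.Icc a b, (∀ j, z t j ≤ g t j) → ∀ i, z t i = g t i → z' t i < g' t i) :
    ∀ t ∈ Set.Icc a b, ∀ i, z t i ≤ g t i := by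
  set S : Set ℝ := {t | ∀ i, z t i ≤ g t i} with hS
  have hclosed : IsClosed (S ∩ Set.Icc a b) := by
    have h : S ∩ Set.Icc a b = Set.Icc a b ∩ ⋂ i, {t | t ∈ Set.Icc a b ∧ z t i ≤ g t i} := by
      ext t
      simp only [hS, Set.mem_inter_iff, Set.mem_ofPred_eq, Set.mem_iInter]
      exact ⟨fun h => ⟨h.2, fun i => ⟨h.2, h.1 i⟩⟩, fun h => ⟨fun i => (h.2 i).2, h.1⟩⟩
    rw [h]
    refine isClosed_Icc.inter (isClosed_iInter fun i => ?_)
    exact isClosed_Icc.isClosed_le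
      (fun t ht => (hz t ht i).continuousAt.continuousWithinAt)
      (fun t ht => (hg t ht i).continuousAt.continuousWithinAt)
  have := hclosed.Icc_subset_of_forall_exists_gt ha ?_
  · exact fun t ht => this ht
  rintro x ⟨hxS, hx⟩ y hy
  have hxI : x ∈ Set.Icc a b := ⟨hx.1, hx.2.le⟩
  have hev : ∀ᶠ t in 𝓝[>] x, t ∈ S := by
    refine eventually_all.2 fun i => ?_
    rcases (hxS i).lt_or_eq with hlt | heq
    · have := ((hz x hxI i).continuousAt.eventually_lt (hg x hxI i).continuousAt hlt)
      filter_upwards [nhdsWithin_le_nhds this] with t ht using ht.le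
    · have hd := ((hg x hxI i).sub (hz x hxI i)).hasDerivWithinAt (s := Set.Ioi x)
      have hpos : 0 < g' x i - z' x i := sub_pos.2 (htouch x hxI hxS i heq)
      have hsl := (hasDerivWithinAt_iff_tendsto_slope' (by simp)).1 hd
      filter_upwards [hsl.eventually_const_lt hpos, self_mem_nhdsWithin] with t ht hxt
      have hxt' : 0 < t - x := sub_pos.2 hxt
      rw [slope_def_field] at ht
      have := (div_pos_iff_of_pos_right hxt').1 ht
      simp only [Pi.sub_apply] at this
      linarith
  obtain ⟨t, h1, h2⟩ := (hev.and (Ioc_mem_nhdsGT hy)).exists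
  exact ⟨t, h1, h2⟩

/-! ### Solutions of the saturated dynamics -/

/-- `z` solves `ż = -sat (L z) + d` on `[0, ∞)` for some disturbance with entries smaller than `δ`
in absolute value. -/
def IsSol {N : ℕ} (L : Matrix (Fin N) (Fin N) ℝ) (δ : ℝ) (z : ℝ → Fin N → ℝ) : Prop :=
  ∃ z' : ℝ → Fin N → ℝ, ∀ t, 0 ≤ t → ∀ i, HasDerivAt (fun s => z s i) (z' t i) t ∧
    |z' t i + max (-1) (min 1 (L.mulVec (z t) i))| < δ

lemma IsSol.neg {N : ℕ} {L : Matrix (Fin N) (Fin N) ℝ} {δ : ℝ} {z : ℝ → Fin N → ℝ}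
    (h : IsSol L δ z) : IsSol L δ (-z) := by
  obtain ⟨z', hz'⟩ := h
  refine ⟨-z', fun t ht i => ⟨(hz' t ht i).1.neg, ?_⟩⟩
  have h2 := (hz' t ht i).2
  have h3 : max (-1) (min 1 (L.mulVec ((-z) t) i)) = -max (-1) (min 1 (L.mulVec (z t) i)) := by
    rw [Pi.neg_apply, Matrix.mulVec_neg, Pi.neg_apply]
    rcases le_total (L.mulVec (z t) i) 1 with h1 | h1 <;>
      rcases le_total (-1) (L.mulVec (z t) i) with h1' | h1' <;> grind
  rw [h3, ← abs_neg]
  convert h2 using 2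
  simp only [Pi.neg_apply]
  ring

/-- Upward velocities are bounded by `2`. -/
lemma IsSol.le_add {N : ℕ} {L : Matrix (Fin N) (Fin N) ℝ} {δ : ℝ} {z : ℝ → Fin N → ℝ}
    (h : IsSol L δ z) (hδ : δ ≤ 1) {a t : ℝ} (ha : 0 ≤ a) (hat : a ≤ t) (i : Fin N) :
    z t i ≤ z a i + 2 * (t - a) := by
  obtain ⟨z', hz'⟩ := h
  refine barrier (a := a) (b := t) (z' := z') (g := fun t i => z a i + 2 * (t - a))
    (g' := fun _ _ => 2) (fun s hs i => (hz' s (ha.trans hs.1) i).1) (fun s hs i => ?_)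
    (fun i => by simp) (fun s hs _ i _ => ?_) t ⟨hat, le_rfl⟩ i
  · simpa using (((hasDerivAt_id s).sub_const a).const_mul 2).const_add (z a i)
  · have h1 := (abs_lt.1 (hz' s (ha.trans hs.1) i).2).2
    have h2 : -1 ≤ max (-1) (min 1 (L.mulVec (z s) i)) := le_max_left _ _
    show z' s i < 2
    linarith

lemma IsSol.ge_sub {N : ℕ} {L : Matrix (Fin N) (Fin N) ℝ} {δ : ℝ} {z : ℝ → Fin N → ℝ}
    (h : IsSol L δ z) (hδ : δ ≤ 1) {a t : ℝ} (ha : 0 ≤ a) (hat : a ≤ t) (i : Fin N) :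
    z a i - 2 * (t - a) ≤ z t i := by
  have := h.neg.le_add hδ ha hat i
  simp only [Pi.neg_apply] at this
  linarith

lemma IsSol.spread_add {N : ℕ} {L : Matrix (Fin N) (Fin N) ℝ} {δ : ℝ} {z : ℝ → Fin N → ℝ}
    (h : IsSol L δ z) (hδ : δ ≤ 1) {a t v : ℝ} (ha : 0 ≤ a) (hat : a ≤ t)
    (hv : Spread v (z a)) : Spread (v + 4 * (t - a)) (z t) := by
  obtain ⟨m, hm⟩ := hv
  refine ⟨m - 2 * (t - a), fun i => ⟨?_, ?_⟩⟩
  · linarith [h.ge_sub hδ ha hat i, (hm i).1]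
  · linarith [h.le_add hδ ha hat i, (hm i).2]

/-- The maximum grows at most at the rate of the disturbance, since `(L z) i ≥ 0` at a maximal
component. -/
lemma IsSol.upper_le {N : ℕ} {L : Matrix (Fin N) (Fin N) ℝ} (hL : IsGraphLaplacian L)
    {δ : ℝ} {z : ℝ → Fin N → ℝ}
    (h : IsSol L δ z) {a t M : ℝ} (ha : 0 ≤ a) (hat : a ≤ t) (hM : ∀ i, z a i ≤ M) (i : Fin N) :
    z t i ≤ M + δ * (t - a) := by
  obtain ⟨z', hz'⟩ := h
  refine barrier (a := a) (b := t) (z' := z') (g := fun t _ => M + δ * (t - a))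
    (g' := fun _ _ => δ) (fun s hs i => (hz' s (ha.trans hs.1) i).1) (fun s hs i => ?_)
    (fun i => by simpa using hM i) (fun s hs hle i hi => ?_) t ⟨hat, le_rfl⟩ i
  · simpa using (((hasDerivAt_id s).sub_const a).const_mul δ).const_add M
  · have h1 := (abs_lt.1 (hz' s (ha.trans hs.1) i).2).2
    have h3 := mulVec_le_of_touch hL hle hi
    rw [mulVec_const hL] at h3
    have h2 : 0 ≤ max (-1) (min 1 (L.mulVec (z s) i)) :=
      le_max_of_le_right (le_min zero_le_one h3)
    show z' s i < δ
    linarith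

/-- If the root starts well below the upper bound `M`, every component is pushed down at an average
rate `κ / 2`, up to the constant `1 / κ`: the barrier is `M + 1 / κ - c (1 / κ + (t - a) / 2)`. -/
lemma IsSol.drop {N : ℕ} {L : Matrix (Fin N) (Fin N) ℝ} (hL : IsGraphLaplacian L)
    {k : Fin N} {c : Fin N → ℝ} {κ : ℝ} (hκ : 0 < κ) (hc0 : ∀ i, κ ≤ c i) (hc1 : ∀ i, c i ≤ 1)
    (hLc : ∀ i, i ≠ k → L.mulVec c i ≤ -κ)
    {δ : ℝ} (hδ : δ ≤ 1 / 4) {z : ℝ → Fin N → ℝ}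
    (h : IsSol L δ z) {a M H : ℝ} (ha : 0 ≤ a) (hH : 0 < H) (hM : ∀ i, z a i ≤ M)
    (hk : z a k ≤ M - 4 * H) (i : Fin N) :
    z (a + H) i ≤ M + 1 / κ - κ * H / 2 := by
  have hspeed := fun t hat => h.le_add (a := a) (t := t) (by linarith) ha hat k
  obtain ⟨z', hz'⟩ := h
  have hB : 0 < 1 / κ := by positivity
  have key := barrier (a := a) (b := a + H) (z' := z') (z := z)
    (g := fun t i => (M + 1 / κ) - c i * (1 / κ + (t - a) / 2))
    (g' := fun _ i => -(c i / 2)) (fun s hs i => (hz' s (ha.trans hs.1) i).1) (fun s hs i => ?_)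
    (fun i => ?_) (fun s hs hle i hi => ?_) (a + H) ⟨by linarith, le_rfl⟩ i
  · refine key.trans ?_
    have h1 := mul_le_mul_of_nonneg_right (hc0 i) (show 0 ≤ 1 / κ + (a + H - a) / 2 by
      rw [add_sub_cancel_left]
      positivity)
    have h2 : κ * (1 / κ + (a + H - a) / 2) = 1 + κ * H / 2 := by
      field_simp
      ring
    linarith
  · have := ((((hasDerivAt_id s).sub_const a).div_const 2).const_add (1 / κ)).const_mul (c i)
    exact (this.const_sub (M + 1 / κ)).congr_deriv (by ring)
  · have h1 := mul_le_mul_of_nonneg_right (hc1 i) hB.le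
    rw [sub_self, zero_div, add_zero]
    linarith [hM i]
  · have hb : 0 ≤ 1 / κ + (s - a) / 2 := by
      have := hs.1
      have : 0 ≤ (s - a) / 2 := by linarith
      positivity
    by_cases hik : i = k
    · -- The root moves too slowly to reach its barrier.
      subst hik
      exfalso
      have h1 := hspeed s hs.1
      have h2 := mul_le_mul_of_nonneg_right (hc1 i) hb
      have := hs.2
      linarith
    · have h3 := mulVec_le_of_touch hL hle hi
      rw [mulVec_affine hL] at h3
      have h4 := mul_le_mul_of_nonneg_left (hLc i hik) hb
      have h5 : 1 ≤ (1 / κ + (s - a) / 2) * κ := by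
        have : (1 / κ + (s - a) / 2) * κ = 1 + (s - a) / 2 * κ := by
          field_simp
        rw [this]
        have := hs.1
        have : 0 ≤ (s - a) / 2 * κ := mul_nonneg (by linarith) hκ.le
        linarith
      have h6 : 1 ≤ L.mulVec (z s) i := by linarith
      have h1 := (abs_lt.1 (hz' s (ha.trans hs.1) i).2).2
      rw [min_eq_left h6] at h1
      have h2 : (1 : ℝ) ≤ max (-1) 1 := le_max_right _ _
      show z' s i < -(c i / 2)
      linarith [hc1 i]

/-! ### Decay of the diameter -/

/-- Over a time interval of length `H = 4 (1 / κ + 1) / κ` the diameter decreases by at least `1`,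
unless it is already small. -/
lemma IsSol.step {N : ℕ} {L : Matrix (Fin N) (Fin N) ℝ} (hL : IsGraphLaplacian L)
    {k : Fin N} {c : Fin N → ℝ} {κ : ℝ} (hκ : 0 < κ) (hc0 : ∀ i, κ ≤ c i) (hc1 : ∀ i, c i ≤ 1)
    (hLc : ∀ i, i ≠ k → L.mulVec c i ≤ -κ) {z : ℝ → Fin N → ℝ}
    (h : IsSol L (κ / 4) z) {a v H : ℝ} (hH : κ * H = 4 * (1 / κ + 1)) (ha : 0 ≤ a)
    (hv : Spread v (z a)) : Spread (max (v - 1) (12 * H)) (z (a + H)) := by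
  have hκ1 : κ ≤ 1 := (hc0 k).trans (hc1 k)
  have hB : 0 < 1 / κ := by positivity
  have hH0 : 0 < H := pos_of_mul_pos_right (by rw [hH]; positivity) hκ.le
  rcases le_total v (8 * H) with hsmall | hbig
  · refine (h.spread_add (by linarith) ha (by linarith) (hv.mono hsmall)).mono ?_
    refine le_max_of_le_right ?_
    linarith
  · obtain ⟨m, hm⟩ := hv
    refine Spread.mono ?_ (le_max_left _ _)
    have e : κ / 4 * (a + H - a) = κ * H / 4 := by ring
    rcases le_total (z a k) (m + v / 2) with hlow | hhigh
    · have hup := h.drop hL hκ hc0 hc1 hLc (by linarith) ha hH0 (M := m + v)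
        (fun i => (hm i).2) (by linarith)
      have hdn := h.neg.upper_le hL ha (t := a + H) (by linarith) (M := -m)
        (fun i => neg_le_neg (hm i).1)
      refine ⟨m - κ * H / 4, fun i => ⟨?_, ?_⟩⟩
      · have := hdn i
        rw [e] at this
        simp only [Pi.neg_apply] at this
        linarith
      · linarith [hup i]
    · have hup := h.neg.drop hL hκ hc0 hc1 hLc (by linarith) ha hH0 (M := -m)
        (fun i => neg_le_neg (hm i).1) (by simp only [Pi.neg_apply]; linarith)
      have hdn := h.upper_le hL ha (t := a + H) (by linarith) (M := m + v)
        (fun i => (hm i).2)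
      refine ⟨m + κ * H / 2 - 1 / κ, fun i => ⟨?_, ?_⟩⟩
      · have := hup i
        simp only [Pi.neg_apply] at this
        linarith
      · have := hdn i
        rw [e] at this
        linarith

lemma IsSol.spread_nat {N : ℕ} {L : Matrix (Fin N) (Fin N) ℝ} (hL : IsGraphLaplacian L)
    {k : Fin N} {c : Fin N → ℝ} {κ : ℝ} (hκ : 0 < κ) (hc0 : ∀ i, κ ≤ c i) (hc1 : ∀ i, c i ≤ 1)
    (hLc : ∀ i, i ≠ k → L.mulVec c i ≤ -κ) {z : ℝ → Fin N → ℝ}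
    (h : IsSol L (κ / 4) z) {v H : ℝ} (hH : κ * H = 4 * (1 / κ + 1)) (hH0 : 0 < H)
    (hv : Spread v (z 0)) (n : ℕ) : Spread (max (v - n) (12 * H)) (z (n * H)) := by
  induction n with
  | zero => simpa using hv.mono (le_max_left _ _)
  | succ n ih =>
    have := h.step hL hκ hc0 hc1 hLc hH (by positivity) ih
    have e : ((n + 1 : ℕ) : ℝ) * H = n * H + H := by
      push_cast
      ring
    rw [e]
    refine this.mono (max_le ?_ (le_max_right _ _))
    rw [sub_le_iff_le_add]
    refine max_le ?_ ?_
    · have := le_max_left (v - ((n + 1 : ℕ) : ℝ)) (12 * H)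
      push_cast at this ⊢
      linarith
    · have := le_max_right (v - ((n + 1 : ℕ) : ℝ)) (12 * H)
      linarith

/-- `v * exp (v + 1 - t / H)` majorizes `v - ⌊t / H⌋`: the exponential is at least `1` up to the
time `H (v + 1)`, and from then on the difference is not positive. -/
lemma IsSol.spread_time {N : ℕ} {L : Matrix (Fin N) (Fin N) ℝ} (hL : IsGraphLaplacian L)
    {k : Fin N} {c : Fin N → ℝ} {κ : ℝ} (hκ : 0 < κ) (hc0 : ∀ i, κ ≤ c i) (hc1 : ∀ i, c i ≤ 1)
    (hLc : ∀ i, i ≠ k → L.mulVec c i ≤ -κ) {z : ℝ → Fin N → ℝ}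
    (h : IsSol L (κ / 4) z) {v H : ℝ} (hH : κ * H = 4 * (1 / κ + 1)) (hH0 : 0 < H)
    (hv0 : 0 ≤ v) (hv : Spread v (z 0)) {t : ℝ} (ht : 0 ≤ t) :
    Spread (v * Real.exp (v + 1 - t / H) + 16 * H) (z t) := by
  have hκ1 : κ ≤ 1 := (hc0 k).trans (hc1 k)
  set n := ⌊t / H⌋₊ with hn
  have h1 : (n : ℝ) ≤ t / H := Nat.floor_le (by positivity)
  have h2 : t / H < n + 1 := Nat.lt_floor_add_one _
  have h1' : n * H ≤ t := (le_div_iff₀ hH0).1 h1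
  have h2' : t < (n + 1) * H := (div_lt_iff₀ hH0).1 h2
  have hs := (h.spread_nat hL hκ hc0 hc1 hLc hH hH0 hv n)
  refine (h.spread_add (by linarith) (by positivity) h1' hs).mono ?_
  have hexp : v - n ≤ v * Real.exp (v + 1 - t / H) := by
    rcases le_total (t / H) (v + 1) with hc | hc
    · have : 1 ≤ Real.exp (v + 1 - t / H) := Real.one_le_exp (by linarith)
      have h3 := mul_le_mul_of_nonneg_left this hv0
      have : (0 : ℝ) ≤ n := Nat.cast_nonneg _
      linarith
    · have : 0 ≤ v * Real.exp (v + 1 - t / H) := by positivity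
      linarith
  have hpos : 0 ≤ v * Real.exp (v + 1 - t / H) := by positivity
  have : max (v - n) (12 * H) ≤ v * Real.exp (v + 1 - t / H) + 12 * H :=
    max_le (by linarith) (by linarith)
  linarith

/-! ### Comparison functions -/

lemma isClassKL_mul_exp {A p H : ℝ} (hA : 0 < A) (hp : 0 < p) (hH : 0 < H) :
    IsClassKL fun r t => A * (p * (r + 1) * Real.exp (p * (r + 1) + 1 - t / H)) := by
  refine ⟨by fun_prop, fun s _ => ⟨by fun_prop, fun r hr => by positivity, ?_⟩, fun r hr =>
    ⟨?_, ?_⟩⟩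
  · intro r hr r' hr' hlt
    have hr0 : 0 ≤ r := hr
    have h1 : p * (r + 1) < p * (r' + 1) := by gcongr
    have h2 : 0 < p * (r + 1) := by positivity
    show A * _ < A * _
    gcongr
  · intro s _ s' _ hle
    have hr0 : 0 ≤ r := hr
    show A * _ ≤ A * _
    gcongr
  · have h1 : Tendsto (fun t : ℝ => p * (r + 1) + 1 - t / H) atTop atBot :=
      tendsto_atBot_add_const_left _ _
        (tendsto_neg_atTop_atBot.comp (tendsto_id.atTop_div_const hH))
    simpa using ((Real.tendsto_exp_atBot.comp h1).const_mul (p * (r + 1))).const_mul A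

/-- **Proposition 2 (ISS of saturated consensus).**
For a graph Laplacian `L` containing a directed spanning tree, there are
`d_max > 0`, `β ∈ KL` and `γ ∈ K` such that for every piecewise-continuous
disturbance with `‖d(t)‖_∞ < d_max`, every solution of `ż = −sat(Lz) + d(t)`
satisfies the stated ISS bound.  (The norm on `Fin N → ℝ` is the sup norm.) -/
theorem saturated_consensus_ISS
    (N : ℕ) (hN : 1 ≤ N)
    (L : Matrix (Fin N) (Fin N) ℝ)
    (hLap : IsGraphLaplacian L) (hTree : HasDirectedSpanningTree L) :
    ∃ dmax > (0:ℝ), ∃ β γ : _, IsClassKL β ∧ IsClassK γ ∧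
      ∀ d z : ℝ → Fin N → ℝ,
        PiecewiseContinuous d →
        (∀ t : ℝ, 0 ≤ t → ‖d t‖ < dmax) →
        (∀ t : ℝ, 0 ≤ t → HasDerivAt z (-sat (L.mulVec (z t)) + d t) t) →
        ∀ t : ℝ, 0 ≤ t →
          ‖L.mulVec (z t)‖ ≤ β ‖L.mulVec (z 0)‖ t +
            γ (sSup {r : ℝ | ∃ τ : ℝ, 0 ≤ τ ∧ r = ‖d τ‖}) := by
  obtain ⟨k, hk⟩ := hTree
  obtain ⟨c, κ, hκ, hc0, hc1, hLc⟩ := exists_potential hLap hk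
  set H : ℝ := 4 * (1 / κ + 1) / κ with hHdef
  have hH0 : 0 < H := by positivity
  have hH : κ * H = 4 * (1 / κ + 1) := by
    rw [hHdef]
    field_simp
  set S : ℝ := ∑ i, ∑ j, |L i j| with hS
  have hS0 : 0 ≤ S := by positivity
  -- `S` vanishes when `N = 1`, whereas `β` has to increase strictly, hence `S + 1`.
  refine ⟨κ / 4, by positivity,
    fun r t => (S + 1) * (2 / κ * (r + 1) * Real.exp (2 / κ * (r + 1) + 1 - t / H)),
    fun r => r + S * (16 * H), isClassKL_mul_exp (by positivity) (by positivity) hH0,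
    ⟨by fun_prop, fun r hr => by positivity, fun r _ r' _ hlt => by simpa using hlt⟩, ?_⟩
  intro d z _ hd hz t ht
  have hsol : IsSol L (κ / 4) z := by
    refine ⟨fun t => -sat (L.mulVec (z t)) + d t, fun t ht i =>
      ⟨hasDerivAt_pi.1 (hz t ht) i, ?_⟩⟩
    have h1 : |d t i| ≤ ‖d t‖ := norm_le_pi_norm (d t) i
    refine lt_of_eq_of_lt ?_ (h1.trans_lt (hd t ht))
    simp [sat]
  set v : ℝ := 2 / κ * (‖L.mulVec (z 0)‖ + 1) with hv
  have hv0 : 0 ≤ v := by positivity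
  have hspread : Spread v (z 0) :=
    (spread_of_norm hLap hκ hc0 hc1 hLc (z 0)).mono (le_of_eq (by rw [hv]; ring))
  have h1 := norm_le_of_spread hLap (by positivity)
    (hsol.spread_time hLap hκ hc0 hc1 hLc hH hH0 hv0 hspread ht)
  have h2 : 0 ≤ sSup {r : ℝ | ∃ τ : ℝ, 0 ≤ τ ∧ r = ‖d τ‖} := by
    refine Real.sSup_nonneg ?_
    rintro _ ⟨τ, _, rfl⟩
    exact norm_nonneg _
  have h3 : 0 ≤ v * Real.exp (v + 1 - t / H) := by positivity
  simp only
  linarith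

end
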